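/- Let $d, T, K \geq 1$ be integers and let $\lambda > 0$. For each $t \in \{1,\dots,T\}$ and $k \in \{1,\dots,K\}$ let $x_{t,k} \in \mathbb{R}^d$ with $\|x_{t,k}\|_2 \leq 1$ and let $w_{t,k} \in [0,1]$ satisfy $\sum_{k=1}^{K} w_{t,k}^2 \leq \lambda$ for every $t$. Define $A_0 = \lambda I_d$ and $A_t = A_{t-1} + \sum_{k=1}^{K} w_{t,k}^2\, x_{t,k} x_{t,k}^{\top}$ for $t \geq 1$. Then $\sum_{t=1}^{T} \sum_{k=1}^{K} w_{t,k}^2\, x_{t,k}^{\top} A_{t-1}^{-1} x_{t,k} \leq 2 d \ln\Bigl(1 + \frac{1}{\lambda d}\sum_{t=1}^{T}\sum_{k=1}^{K} w_{t,k}^2\Bigr)$. -/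

import Mathlib

/-!
Write `u_t = ∑ₖ w² xᵀ A_{t-1}⁻¹ x = tr (A_{t-1}⁻¹ S_t)` for the round-`t` update `S_t`. For positive
definite `B` and positive semidefinite `S`, factoring `B = CᵀC` and expanding the product of the
eigenvalues of `1 + C⁻ᵀ S C⁻¹` gives `det (B + S) ≥ det B * (1 + tr (B⁻¹ S))`
(`det_mul_one_add_trace_le`), hence `log (1 + u_t) ≤ log det A_t - log det A_{t-1}`. As
`A_{t-1} ≥ λ`, each `xᵀ A_{t-1}⁻¹ x` is at most `1 / λ` (`dotProduct_inv_mulVec_le`), so the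
condition `∑ₖ w² ≤ λ` yields `u_t ≤ 1` and therefore `u_t ≤ 2 log (1 + u_t)`. The sum
telescopes to `2 (log det A_T - d log λ)`, and AM-GM on the eigenvalues of `A_T`
(`log_det_le`) bounds `log det A_T` by `d log (tr A_T / d)`, where `tr A_T ≤ λ d + ∑ w²`.
-/

open Finset Matrix Real

lemma one_add_trace_le_det_one_add {n : Type*} [Fintype n] [DecidableEq n] {M : Matrix n n ℝ}
    (hM : M.PosSemidef) : 1 + M.trace ≤ (1 + M).det := by
  -- `det (1 + M)` is read off from the characteristic polynomial at `-1`, up to a sign.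
  have h1 : (1 + M).det = ∏ i, (1 + hM.1.eigenvalues i) := by
    have h := Matrix.eval_charpoly M (-1)
    rw [hM.1.charpoly_eq, Polynomial.eval_prod] at h
    have h2 : Matrix.scalar n (-1 : ℝ) - M = -(1 + M) := by
      rw [map_neg, map_one]; abel
    have h3 : ∀ i, Polynomial.eval (-1 : ℝ)
        (Polynomial.X - Polynomial.C ((hM.1.eigenvalues i : ℝ) : ℝ))
        = -1 * (1 + hM.1.eigenvalues i) := by
      intro i; simp; ring
    rw [h2, Matrix.det_neg] at h
    have h4 : ∏ i, (-1 * (1 + hM.1.eigenvalues i)) = (-1) ^ Fintype.card n * (1 + M).det := by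
      rw [← h]; exact Finset.prod_congr rfl fun i _ => (h3 i).symm
    rw [Finset.prod_mul_distrib, Finset.prod_const, Finset.card_univ] at h4
    exact (mul_left_cancel₀ (pow_ne_zero _ (by norm_num)) h4).symm
  have h2 : M.trace = ∑ i, hM.1.eigenvalues i := by
    simpa using hM.1.trace_eq_sum_eigenvalues
  rw [h1, h2]
  have key : ∀ s : Finset n,
      1 + ∑ i ∈ s, hM.1.eigenvalues i ≤ ∏ i ∈ s, (1 + hM.1.eigenvalues i) := by
    intro s
    induction s using Finset.induction_on with
    | empty => simp
    | insert a s ha ih =>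
      rw [Finset.sum_insert ha, Finset.prod_insert ha]
      have e := hM.eigenvalues_nonneg a
      have e2 : 0 ≤ ∑ i ∈ s, hM.1.eigenvalues i :=
        Finset.sum_nonneg fun i _ => hM.eigenvalues_nonneg i
      nlinarith [mul_le_mul_of_nonneg_left ih e, mul_nonneg e e2]
  exact key Finset.univ

open scoped MatrixOrder in
/-- Reduces to `one_add_trace_le_det_one_add` by conjugating with a square-root factor of `B`. -/
lemma det_mul_one_add_trace_le {n : Type*} [Fintype n] [DecidableEq n] {B S : Matrix n n ℝ}
    (hB : B.PosDef) (hS : S.PosSemidef) :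
    B.det * (1 + (B⁻¹ * S).trace) ≤ (B + S).det := by
  have hdet := hB.det_pos
  obtain ⟨C, hC⟩ := CStarAlgebra.nonneg_iff_eq_star_mul_self.mp hB.posSemidef.nonneg
  rw [star_eq_conjTranspose] at hC
  have hCu : IsUnit C.det := by
    rw [isUnit_iff_ne_zero]
    intro h
    rw [hC, Matrix.det_mul, h, mul_zero] at hdet
    exact lt_irrefl _ hdet
  have hCC : C⁻¹ * C = 1 := Matrix.nonsing_inv_mul C hCu
  have hCC2 : Cᴴ * (C⁻¹)ᴴ = 1 := by
    rw [← Matrix.conjTranspose_mul, hCC, Matrix.conjTranspose_one]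
  have hM := hS.conjTranspose_mul_mul_same C⁻¹
  have hdetM := one_add_trace_le_det_one_add hM
  have htr : (B⁻¹ * S).trace = ((C⁻¹)ᴴ * S * C⁻¹).trace := by
    rw [hC, Matrix.mul_inv_rev, Matrix.trace_mul_comm ((C⁻¹)ᴴ * S) C⁻¹,
      ← Matrix.conjTranspose_nonsing_inv, Matrix.mul_assoc]
  have hsum : B + S = Cᴴ * (1 + (C⁻¹)ᴴ * S * C⁻¹) * C := by
    have h : Cᴴ * ((C⁻¹)ᴴ * S * C⁻¹) * C = (Cᴴ * (C⁻¹)ᴴ) * S * (C⁻¹ * C) := by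
      simp only [Matrix.mul_assoc]
    rw [Matrix.mul_add, Matrix.add_mul, h, hCC, hCC2, Matrix.mul_one, Matrix.mul_one,
      Matrix.one_mul, ← hC]
  have hd2 : (B + S).det = B.det * (1 + (C⁻¹)ᴴ * S * C⁻¹).det := by
    rw [hsum, Matrix.det_mul, Matrix.det_mul, hC, Matrix.det_mul]; ring
  rw [hd2, htr]
  exact mul_le_mul_of_nonneg_left hdetM hdet.le

/-- AM-GM for the eigenvalues, obtained from the tangent line of `log` at their mean `c`. -/
lemma log_det_le {d : ℕ} {A : Matrix (Fin d) (Fin d) ℝ} (hA : A.PosDef) {c : ℝ}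
    (hc : 0 < c) (htr : A.trace = d * c) : Real.log A.det ≤ d * Real.log c := by
  have h1 : A.det = ∏ i, hA.1.eigenvalues i := by simpa using hA.1.det_eq_prod_eigenvalues
  have h2 : A.trace = ∑ i, hA.1.eigenvalues i := by
    simpa using hA.1.trace_eq_sum_eigenvalues
  rw [h1, Real.log_prod fun i _ => (hA.eigenvalues_pos i).ne']
  calc ∑ i, Real.log (hA.1.eigenvalues i)
      ≤ ∑ i, (hA.1.eigenvalues i / c - 1 + Real.log c) := by
        refine Finset.sum_le_sum fun i _ => ?_
        have e := hA.eigenvalues_pos i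
        have := Real.log_le_sub_one_of_pos (div_pos e hc)
        rw [Real.log_div e.ne' hc.ne'] at this
        linarith
    _ = d * Real.log c := by
        rw [Finset.sum_add_distrib, Finset.sum_sub_distrib, ← Finset.sum_div, ← h2, htr]
        simp [hc.ne']

/-- With `y = A⁻¹ v`, this combines `0 ≤ ‖v - l y‖²` with `l ‖y‖² ≤ yᵀ A y = v ⬝ᵥ y`. -/
lemma dotProduct_inv_mulVec_le {n : Type*} [Fintype n] [DecidableEq n] {A : Matrix n n ℝ}
    {l : ℝ} (hl : 0 < l) (hA : A.PosDef) (hAl : (A - l • (1 : Matrix n n ℝ)).PosSemidef)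
    (v : n → ℝ) : l * (v ⬝ᵥ (A⁻¹ *ᵥ v)) ≤ v ⬝ᵥ v := by
  have hu : IsUnit A.det := isUnit_iff_ne_zero.mpr hA.det_pos.ne'
  set y := A⁻¹ *ᵥ v with hy
  have hAy : A *ᵥ y = v := by
    rw [hy, Matrix.mulVec_mulVec, Matrix.mul_nonsing_inv _ hu, Matrix.one_mulVec]
  have h1 := hAl.dotProduct_mulVec_nonneg y
  rw [Matrix.sub_mulVec, Matrix.smul_mulVec, Matrix.one_mulVec, hAy, star_trivial,
    dotProduct_sub, dotProduct_smul, smul_eq_mul, dotProduct_comm y v] at h1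
  have h2 : 0 ≤ (v - l • y) ⬝ᵥ (v - l • y) := Finset.sum_nonneg fun i _ => mul_self_nonneg _
  rw [sub_dotProduct, dotProduct_sub, dotProduct_sub, smul_dotProduct, smul_dotProduct,
    dotProduct_smul, dotProduct_smul, dotProduct_comm y v] at h2
  simp only [smul_eq_mul] at h2
  nlinarith [mul_nonneg hl.le h1]

/-- Lemma 5 of the paper's appendix (after Lemma 4.4 of Li et al. 2016): the
elliptical-potential bound on the cumulative weighted squared confidence widths.
Here `A ↑t` (for `t : Fin T`) is the design matrix `A_{t-1}` at the start of round `t`. -/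
theorem stmt_6 (d T K : ℕ) (hd : 1 ≤ d) (hT : 1 ≤ T) (hK : 1 ≤ K)
    (lam : ℝ) (hlam : 0 < lam)
    (x : Fin T → Fin K → (Fin d → ℝ))
    (hx : ∀ t k, Real.sqrt (x t k ⬝ᵥ x t k) ≤ 1)
    (w : Fin T → Fin K → ℝ)
    (hw : ∀ t k, w t k ∈ Set.Icc (0 : ℝ) 1)
    (hwsum : ∀ t, ∑ k : Fin K, (w t k) ^ 2 ≤ lam)
    (A : ℕ → Matrix (Fin d) (Fin d) ℝ)
    (hA0 : A 0 = lam • (1 : Matrix (Fin d) (Fin d) ℝ))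
    (hAt : ∀ t : Fin T,
      A (t + 1) = A t + ∑ k : Fin K, (w t k) ^ 2 • vecMulVec (x t k) (x t k)) :
    ∑ t : Fin T, ∑ k : Fin K, (w t k) ^ 2 * (x t k ⬝ᵥ ((A t)⁻¹ *ᵥ x t k)) ≤
      2 * d * Real.log (1 + (1 / (lam * d)) * ∑ t : Fin T, ∑ k : Fin K, (w t k) ^ 2) := by
  have hd0 : (0 : ℝ) < d := by exact_mod_cast hd
  have hxx : ∀ t k, x t k ⬝ᵥ x t k ≤ 1 := fun t k => by
    simpa using Real.sqrt_le_iff.mp (hx t k)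
  set S : Fin T → Matrix (Fin d) (Fin d) ℝ :=
    fun t => ∑ k : Fin K, (w t k) ^ 2 • vecMulVec (x t k) (x t k) with hSdef
  have hS : ∀ t, (S t).PosSemidef := fun t =>
    Matrix.posSemidef_sum _ fun k _ =>
      Matrix.PosSemidef.smul (by simpa using Matrix.posSemidef_vecMulVec_self_star (x t k))
        (sq_nonneg (w t k))
  have hlower : ∀ n, n ≤ T → (A n - lam • (1 : Matrix (Fin d) (Fin d) ℝ)).PosSemidef := by
    intro n
    induction n with
    | zero => intro _; rw [hA0, sub_self]; exact Matrix.PosSemidef.zero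
    | succ n ih =>
      intro hn
      have h := hAt ⟨n, hn⟩
      simp only at h
      rw [h, add_sub_right_comm]
      exact (ih (by omega)).add (hS ⟨n, hn⟩)
  have hpos : ∀ n, n ≤ T → (A n).PosDef := by
    intro n hn
    have h := (Matrix.PosDef.smul (Matrix.PosDef.one (n := Fin d) (R := ℝ)) hlam).add_posSemidef
      (hlower n hn)
    rwa [add_sub_cancel] at h
  have hround : ∀ t : Fin T, ∑ k : Fin K, (w t k) ^ 2 * (x t k ⬝ᵥ ((A t)⁻¹ *ᵥ x t k)) ≤
      2 * (Real.log (A (t + 1)).det - Real.log (A t).det) := by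
    intro t
    have hAp := hpos t t.2.le
    have hAp1 := hpos (t + 1) t.2
    set u := ∑ k : Fin K, (w t k) ^ 2 * (x t k ⬝ᵥ ((A t)⁻¹ *ᵥ x t k)) with hu
    have hutr : ((A t)⁻¹ * S t).trace = u := by
      rw [hu, hSdef]
      simp only [Finset.mul_sum, Matrix.trace_sum, Matrix.mul_smul, Matrix.trace_smul,
        Matrix.mul_vecMulVec, Matrix.trace_vecMulVec, smul_eq_mul]
      exact Finset.sum_congr rfl fun k _ => by rw [dotProduct_comm]
    have hu0 : 0 ≤ u := Finset.sum_nonneg fun k _ => mul_nonneg (sq_nonneg _) (by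
      simpa using hAp.inv.posSemidef.dotProduct_mulVec_nonneg (x t k))
    have hu1 : u ≤ 1 := by
      have h : lam * u ≤ lam := by
        rw [hu, Finset.mul_sum]
        refine le_trans (Finset.sum_le_sum fun k _ => ?_) (hwsum t)
        have h1 := (dotProduct_inv_mulVec_le hlam hAp (hlower t t.2.le) (x t k)).trans (hxx t k)
        nlinarith [mul_le_mul_of_nonneg_left h1 (sq_nonneg (w t k))]
      nlinarith
    have hdet := det_mul_one_add_trace_le hAp (hS t)
    rw [hutr, ← hAt t] at hdet
    have hlog := Real.log_le_log (mul_pos hAp.det_pos (by linarith)) hdet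
    rw [Real.log_mul hAp.det_pos.ne' (by linarith)] at hlog
    have h2 : u ≤ 2 * Real.log (1 + u) := by
      have h3 := Real.le_log_one_add_of_nonneg hu0
      rw [div_le_iff₀ (by linarith)] at h3
      nlinarith
    linarith
  have htrace : ∀ t : Fin T, (A (t + 1)).trace - (A t).trace ≤ ∑ k : Fin K, (w t k) ^ 2 := by
    intro t
    rw [hAt t, Matrix.trace_add, add_sub_cancel_left, Matrix.trace_sum]
    refine Finset.sum_le_sum fun k _ => ?_
    rw [Matrix.trace_smul, Matrix.trace_vecMulVec, smul_eq_mul]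
    exact mul_le_of_le_one_right (sq_nonneg _) (hxx t k)
  set W := ∑ t : Fin T, ∑ k : Fin K, (w t k) ^ 2 with hW
  have htr0 : (A 0).trace = lam * d := by simp [hA0]
  have htrT : (A T).trace ≤ lam * d + W := by
    have h := Finset.sum_le_sum fun (t : Fin T) (_ : t ∈ Finset.univ) => htrace t
    rw [Fin.sum_univ_eq_sum_range (fun n => (A (n + 1)).trace - (A n).trace) T,
      Finset.sum_range_sub (fun n => (A n).trace), htr0] at h
    linarith
  have hsum := Finset.sum_le_sum fun (t : Fin T) (_ : t ∈ Finset.univ) => hround t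
  rw [← Finset.mul_sum,
    Fin.sum_univ_eq_sum_range (fun n => Real.log (A (n + 1)).det - Real.log (A n).det) T,
    Finset.sum_range_sub (fun n => Real.log (A n).det)] at hsum
  have hdet0 : Real.log (A 0).det = d * Real.log lam := by
    rw [hA0, Matrix.det_smul, Matrix.det_one, mul_one, Real.log_pow, Fintype.card_fin]
  have htrpos : 0 < (A T).trace := by
    have : Nonempty (Fin d) := ⟨⟨0, hd⟩⟩
    exact (hpos T le_rfl).trace_pos
  have hdetT := log_det_le (hpos T le_rfl) (div_pos htrpos hd0) (by field_simp)
  have hratio : Real.log ((A T).trace / d) - Real.log lam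
      ≤ Real.log (1 + (1 / (lam * d)) * W) := by
    rw [← Real.log_div (div_pos htrpos hd0).ne' hlam.ne']
    refine Real.log_le_log (div_pos (div_pos htrpos hd0) hlam) ?_
    have h : 1 + (1 / (lam * d)) * W = (lam * d + W) / d / lam := by field_simp
    rw [h]
    gcongr
  nlinarith [mul_le_mul_of_nonneg_left hratio hd0.le]
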